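/- arXiv:2509.04701 — 2 statements merged into one kernel-verified Lean document; each statement's English description precedes it below -/
import Mathlib

section
/- For every integer n ≥ 1, the metric space (ℝⁿ×ℝ, d), where d is the parabolic metric, has Hausdorff dimension n+2; that is, the Hausdorff dimension (computed with respect to the parabolic metric) of the whole space ℝⁿ×ℝ equals n+2. -/
noncomputable section
open MeasureTheory Set Matrix
open scoped ENNReal NNReal

namespace Parabolic

/-- The space `ℝⁿ × ℝ` (spatial `×` time). -/
abbrev Amb (n : ℕ) := EuclideanSpace ℝ (Fin n) × ℝ

/-- The parabolic distance `‖X - Y‖ + |t - s|^{1/2}` on `ℝⁿ × ℝ`. -/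
def pdist {n : ℕ} (P Q : Amb n) : ℝ := dist P.1 Q.1 + Real.sqrt (dist P.2 Q.2)

lemma sqrt_add_le (a b : ℝ) (ha : 0 ≤ a) (hb : 0 ≤ b) :
    Real.sqrt (a + b) ≤ Real.sqrt a + Real.sqrt b := by
  have h : a + b ≤ (Real.sqrt a + Real.sqrt b) ^ 2 := by
    rw [add_sq]
    nlinarith [Real.sq_sqrt ha, Real.sq_sqrt hb,
      mul_nonneg (Real.sqrt_nonneg a) (Real.sqrt_nonneg b)]
  calc Real.sqrt (a + b) ≤ Real.sqrt ((Real.sqrt a + Real.sqrt b) ^ 2) := Real.sqrt_le_sqrt h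
    _ = Real.sqrt a + Real.sqrt b := Real.sqrt_sq (by positivity)

lemma pdist_self {n : ℕ} (P : Amb n) : pdist P P = 0 := by simp [pdist]

lemma pdist_comm {n : ℕ} (P Q : Amb n) : pdist P Q = pdist Q P := by
  simp [pdist, dist_comm]

lemma pdist_triangle {n : ℕ} (P Q R : Amb n) : pdist P R ≤ pdist P Q + pdist Q R := by
  have h1 : dist P.1 R.1 ≤ dist P.1 Q.1 + dist Q.1 R.1 := dist_triangle _ _ _
  have h2 : Real.sqrt (dist P.2 R.2) ≤ Real.sqrt (dist P.2 Q.2) + Real.sqrt (dist Q.2 R.2) := by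
    calc Real.sqrt (dist P.2 R.2) ≤ Real.sqrt (dist P.2 Q.2 + dist Q.2 R.2) :=
          Real.sqrt_le_sqrt (dist_triangle _ _ _)
      _ ≤ _ := sqrt_add_le _ _ dist_nonneg dist_nonneg
  simp only [pdist]; linarith

lemma pdist_eq_zero {n : ℕ} {P Q : Amb n} (h : pdist P Q = 0) : P = Q := by
  have h1 : dist P.1 Q.1 = 0 := by
    have := Real.sqrt_nonneg (dist P.2 Q.2)
    have := dist_nonneg (x := P.1) (y := Q.1)
    simp only [pdist] at h; linarith
  have h2 : Real.sqrt (dist P.2 Q.2) = 0 := by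
    simp only [pdist] at h; linarith [dist_nonneg (x := P.1) (y := Q.1)]
  have h2' : dist P.2 Q.2 = 0 :=
    le_antisymm (Real.sqrt_eq_zero'.mp h2) dist_nonneg
  exact Prod.ext (dist_eq_zero.mp h1) (dist_eq_zero.mp h2')

/-- Type synonym for `ℝⁿ × ℝ` carrying the parabolic metric. -/
def PS (n : ℕ) : Type := Amb n

def toPS {n : ℕ} : Amb n → PS n := id
def toA {n : ℕ} : PS n → Amb n := id

instance (n : ℕ) : MetricSpace (PS n) where
  dist P Q := pdist (toA P) (toA Q)
  dist_self P := pdist_self _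
  dist_comm P Q := pdist_comm _ _
  dist_triangle P Q R := pdist_triangle _ _ _
  eq_of_dist_eq_zero h := pdist_eq_zero h

instance (n : ℕ) : MeasurableSpace (PS n) := borel _
instance (n : ℕ) : BorelSpace (PS n) := ⟨rfl⟩

/-!
If a measure gives closed balls of radius `r` mass comparable to `r ^ d`, the space has Hausdorff
dimension `d`. On the one hand, a set of diameter `r` has mass at most a constant times `r ^ d`, so
the measure is absolutely continuous with respect to `μH[d]` (mass distribution principle). On the
other hand, disjoint balls of radius `r / 2` around an `r`-separated set each have mass at least a
constant times `r ^ d`, so there are at most `O(r ^ (-d))` of them; this bounds covering numbers and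
hence `μH[d]`.

Lebesgue measure on `ℝⁿ × ℝ` has this property with `d = n + 2`: a parabolic ball of radius `r` lies
between two products of a spatial ball of radius `≍ r` and a time interval of length `≍ r ^ 2`, of
volume `≍ r ^ n * r ^ 2`.
-/

open Filter Metric Topology

/-- Uniform Ahlfors `d`-regularity of `μ` at small scales: closed balls of small radius `r` have
measure comparable to `r ^ d`, uniformly in the centre. It determines the Hausdorff dimension.
Including `r = 0` among the radii costs nothing when `0 < d`, and is what handles sets of diameter
zero. -/
def IsAhlforsRegular {X : Type*} [PseudoEMetricSpace X] [MeasurableSpace X] (μ : Measure X)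
    (d : ℝ≥0) : Prop :=
  ∃ c C : ℝ≥0∞, c ≠ 0 ∧ C ≠ ∞ ∧ ∀ᶠ r : ℝ≥0 in 𝓝 0, ∀ x,
    c * (r : ℝ≥0∞) ^ (d : ℝ) ≤ μ (closedEBall x r) ∧
      μ (closedEBall x r) ≤ C * (r : ℝ≥0∞) ^ (d : ℝ)

lemma packingNumber_mul_le_measure {X : Type*} [PseudoEMetricSpace X] [MeasurableSpace X]
    [OpensMeasurableSpace X] {μ : Measure X} {s t : Set X} {r : ℝ≥0} {a : ℝ≥0∞}
    (ha : ∀ x ∈ s, a ≤ μ (closedEBall x r)) (hst : ∀ x ∈ s, closedEBall x r ⊆ t) :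
    packingNumber (2 * r) s * a ≤ μ t := by
  simp only [packingNumber, ENat.toENNReal_iSup, ENNReal.iSup_mul]
  refine iSup₂_le fun N hN => iSup_le fun hsep => ?_
  have hdisj : Pairwise (Function.onFun Disjoint fun x : N => closedEBall (x : X) r) := by
    intro x y hxy
    have hlt : (r : ℝ≥0∞) + r < edist (x : X) y := by
      simpa [two_mul] using hsep x.2 y.2 (Subtype.coe_ne_coe.2 hxy)
    exact Set.disjoint_left.2 fun z hzx hzy => hlt.not_ge <|
      (edist_triangle_left _ _ z).trans (add_le_add hzx hzy)
  calc (N.encard : ℝ≥0∞) * a = ∑' _ : N, a := (ENNReal.tsum_set_const N a).symm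
    _ ≤ ∑' x : N, μ (closedEBall (x : X) r) := ENNReal.tsum_le_tsum fun x => ha x (hN x.2)
    _ ≤ μ (⋃ x : N, closedEBall (x : X) r) :=
        tsum_meas_le_meas_iUnion_of_disjoint μ
          (fun _ => isClosed_closedEBall.measurableSet) hdisj
    _ ≤ μ t := measure_mono (iUnion_subset fun x => hst x (hN x.2))

section AhlforsRegular

variable {X : Type*} [EMetricSpace X] [MeasurableSpace X] [BorelSpace X]
  {μ : Measure X} {d : ℝ≥0} {s t : Set X}

lemma absolutelyContinuous_hausdorffMeasure {d : ℝ} {C : ℝ≥0∞} (hC : C ≠ ∞)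
    (h : ∀ᶠ r : ℝ≥0 in 𝓝 0, ∀ x, μ (closedEBall x r) ≤ C * (r : ℝ≥0∞) ^ d) :
    μ ≪ μH[d] := by
  obtain ⟨ε, hε, hball⟩ := NNReal.nhds_zero_basis.eventually_iff.1 h
  have hle : C⁻¹ • μ ≤ μH[d] := by
    refine Measure.le_hausdorffMeasure _ _ (ε / 2 : ℝ≥0) (by simpa using hε.ne') fun s hs => ?_
    obtain rfl | ⟨x, hx⟩ := s.eq_empty_or_nonempty
    · simp
    lift ediam s to ℝ≥0 using ne_top_of_le_ne_top ENNReal.coe_ne_top hs with r hr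
    have hrε : r ∈ Iio ε := (ENNReal.coe_le_coe.1 hs).trans_lt (NNReal.half_lt_self hε.ne')
    rw [Measure.smul_apply, smul_eq_mul, mul_comm, ← div_eq_mul_inv]
    refine ENNReal.div_le_of_le_mul' ?_
    calc μ s ≤ μ (closedEBall x r) := measure_mono fun y hy => hr ▸ edist_le_ediam_of_mem hy hx
      _ ≤ C * (r : ℝ≥0∞) ^ d := hball hrε x
  have hsmul : μ ≪ C⁻¹ • μ := Measure.absolutelyContinuous_smul (ENNReal.inv_ne_zero.2 hC)
  exact hsmul.trans hle.absolutelyContinuous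

lemma hausdorffMeasure_le_of_coveringNumber_mul_le {K : ℝ≥0∞}
    (h : ∀ᶠ r : ℝ≥0 in 𝓝[>] 0, coveringNumber r s * (r : ℝ≥0∞) ^ (d : ℝ) ≤ K) :
    μH[d] s ≤ 2 ^ (d : ℝ) * K := by
  obtain rfl | hK := eq_or_ne K ∞
  · simp [ENNReal.mul_top]
  have hcover : ∀ᶠ r : ℝ≥0 in 𝓝[>] 0, coveringNumber r s ≠ ⊤ := by
    filter_upwards [h, self_mem_nhdsWithin] with r hr (hr0 : 0 < r) htop
    rw [htop, ENat.toENNReal_top, ENNReal.top_mul (by simp [hr0.ne'])] at hr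
    exact hK (top_le_iff.1 hr)
  have hdiam : Tendsto (fun r : ℝ≥0 => 2 * (r : ℝ≥0∞)) (𝓝[>] 0) (𝓝 0) := by
    have hcont : Continuous fun r : ℝ≥0 => 2 * (r : ℝ≥0∞) :=
      (ENNReal.continuous_const_mul ENNReal.ofNat_ne_top).comp ENNReal.continuous_coe
    exact tendsto_nhdsWithin_of_tendsto_nhds (hcont.tendsto' _ _ (by simp))
  have (r : ℝ≥0) : Countable (minimalCover r s) := finite_minimalCover.countable
  refine (Measure.hausdorffMeasure_le_liminf_tsum d s _ hdiam
    (fun r (x : minimalCover r s) => closedEBall (x : X) r)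
    (.of_forall fun r x => ediam_closedEBall_le) ?_).trans ?_
  · filter_upwards [hcover] with r hr
    simpa [isCover_iff_subset_iUnion_closedEBall] using isCover_minimalCover hr
  refine liminf_le_of_frequently_le' (Eventually.frequently ?_)
  filter_upwards [h, hcover] with r hr hfin
  calc ∑' x : minimalCover r s, ediam (closedEBall (x : X) r) ^ (d : ℝ)
      ≤ ∑' _ : minimalCover r s, (2 * (r : ℝ≥0∞)) ^ (d : ℝ) :=
        ENNReal.tsum_le_tsum fun x => ENNReal.rpow_le_rpow ediam_closedEBall_le d.coe_nonneg
    _ = 2 ^ (d : ℝ) * (coveringNumber r s * (r : ℝ≥0∞) ^ (d : ℝ)) := by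
        rw [ENNReal.tsum_set_const, encard_minimalCover hfin,
          ENNReal.mul_rpow_of_nonneg _ _ d.coe_nonneg, mul_left_comm]
    _ ≤ 2 ^ (d : ℝ) * K := by gcongr

lemma dimH_le_of_le_measure_closedEBall {c : ℝ≥0∞} (hc : c ≠ 0) (ht : μ t ≠ ∞)
    (h : ∀ᶠ r : ℝ≥0 in 𝓝 0, ∀ x ∈ s,
      c * (r : ℝ≥0∞) ^ (d : ℝ) ≤ μ (closedEBall x r) ∧ closedEBall x r ⊆ t) :
    dimH s ≤ d := by
  have hK : 2 ^ (d : ℝ) * (μ t / c) ≠ ∞ :=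
    ENNReal.mul_ne_top (by simp) (ENNReal.div_ne_top ht hc)
  refine dimH_le_of_hausdorffMeasure_ne_top (ne_top_of_le_ne_top
    (ENNReal.mul_ne_top (by simp) hK) (hausdorffMeasure_le_of_coveringNumber_mul_le ?_))
  have hhalf : Tendsto (fun r : ℝ≥0 => r / 2) (𝓝[>] 0) (𝓝 0) :=
    tendsto_nhdsWithin_of_tendsto_nhds (Continuous.tendsto' (by fun_prop) _ _ (zero_div _))
  filter_upwards [hhalf.eventually h] with r hr
  have hpack := packingNumber_mul_le_measure (fun x hx => (hr x hx).1) fun x hx => (hr x hx).2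
  rw [mul_div_cancel₀ r two_ne_zero] at hpack
  have hscale : (r : ℝ≥0∞) ^ (d : ℝ) = 2 ^ (d : ℝ) * ((r / 2 : ℝ≥0) : ℝ≥0∞) ^ (d : ℝ) := by
    rw [← ENNReal.mul_rpow_of_nonneg _ _ d.coe_nonneg, ← ENNReal.coe_ofNat, ← ENNReal.coe_mul,
      mul_div_cancel₀ r two_ne_zero]
  rw [hscale, mul_left_comm]
  gcongr
  rw [ENNReal.le_div_iff_mul_le (.inl hc) (.inr ht)]
  calc _ = (coveringNumber r s : ℝ≥0∞) * (c * ((r / 2 : ℝ≥0) : ℝ≥0∞) ^ (d : ℝ)) := by ring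
    _ ≤ packingNumber r s * (c * ((r / 2 : ℝ≥0) : ℝ≥0∞) ^ (d : ℝ)) := by
        gcongr
        exact coveringNumber_le_packingNumber r s
    _ ≤ μ t := hpack

theorem IsAhlforsRegular.le_dimH_univ [Nonempty X] (h : IsAhlforsRegular μ d) :
    d ≤ dimH (univ : Set X) := by
  obtain ⟨c, C, hc, hC, hball⟩ := h
  obtain ⟨r, hr, hr0 : 0 < r⟩ :=
    ((eventually_nhdsWithin_of_eventually_nhds (s := Ioi 0) hball).and self_mem_nhdsWithin).exists
  have hpos : μ (closedEBall (Classical.arbitrary X) r) ≠ 0 :=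
    (lt_of_lt_of_le (pos_iff_ne_zero.2 (by simp [hc, hr0.ne'])) (hr _).1).ne'
  refine le_dimH_of_hausdorffMeasure_ne_zero fun h0 => hpos ?_
  exact measure_mono_null (subset_univ _)
    (absolutelyContinuous_hausdorffMeasure hC (hball.mono fun _ hρ x => (hρ x).2) h0)

theorem IsAhlforsRegular.dimH_univ_le [SecondCountableTopology X] (h : IsAhlforsRegular μ d) :
    dimH (univ : Set X) ≤ d := by
  obtain ⟨c, C, hc, hC, hball⟩ := h
  obtain ⟨ε, hfin, hε : 0 < ε⟩ :
      ∃ ε : ℝ≥0, (∀ x, μ (closedEBall x (ε + ε : ℝ≥0)) ≠ ∞) ∧ 0 < ε := by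
    have htwo : Tendsto (fun r : ℝ≥0 => r + r) (𝓝[>] 0) (𝓝 0) :=
      tendsto_nhdsWithin_of_tendsto_nhds (Continuous.tendsto' (by fun_prop) _ _ (add_zero _))
    obtain ⟨r, hr, hr0⟩ := ((htwo.eventually hball).and self_mem_nhdsWithin).exists
    refine ⟨r, fun x => ?_, hr0⟩
    exact ne_top_of_le_ne_top (ENNReal.mul_ne_top hC (by simp)) (hr x).2
  have hlocal (x : X) : dimH (closedEBall x ε) ≤ d := by
    refine dimH_le_of_le_measure_closedEBall hc (hfin x) ?_
    filter_upwards [hball, Iio_mem_nhds hε] with r hr hrε y hy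
    refine ⟨(hr y).1, fun z hz => ?_⟩
    calc edist z x ≤ edist z y + edist y x := edist_triangle z y x
      _ ≤ (ε + ε : ℝ≥0) := by
        push_cast
        exact add_le_add (hz.trans (ENNReal.coe_le_coe.2 hrε.le)) hy
  obtain ⟨S, hS, hcover⟩ := TopologicalSpace.countable_cover_nhds fun x : X =>
    closedEBall_mem_nhds x (ENNReal.coe_pos.2 hε)
  rw [← hcover, dimH_bUnion hS]
  exact iSup₂_le fun x _ => hlocal x

theorem IsAhlforsRegular.dimH_univ [Nonempty X] [SecondCountableTopology X]
    (h : IsAhlforsRegular μ d) : dimH (univ : Set X) = d :=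
  le_antisymm h.dimH_univ_le h.le_dimH_univ

end AhlforsRegular

section ParabolicSpace

lemma addHaar_prod_volume_closedBall_sq {E : Type*} [NormedAddCommGroup E] [NormedSpace ℝ E]
    [FiniteDimensional ℝ E] [MeasurableSpace E] [BorelSpace E] (μ : Measure E) [μ.IsAddHaarMeasure]
    (x : E) (t : ℝ) (r : ℝ≥0) :
    μ.prod volume (closedBall x r ×ˢ closedBall t (r ^ 2)) =
      2 * μ (ball 0 1) * (r : ℝ≥0∞) ^ (Module.finrank ℝ E + 2) := by
  rw [Measure.prod_prod, Measure.addHaar_closedBall _ _ r.coe_nonneg, Real.volume_closedBall,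
    ENNReal.ofReal_mul zero_le_two, ENNReal.ofReal_pow r.coe_nonneg,
    ENNReal.ofReal_pow r.coe_nonneg, ENNReal.ofReal_coe_nnreal, ENNReal.ofReal_ofNat]
  ring

variable {n : ℕ}

lemma continuous_toPS : Continuous (toPS : Amb n → PS n) := by
  refine continuous_iff_continuous_dist.2 ?_
  change Continuous fun x : Amb n × Amb n => dist x.1.1 x.2.1 + √(dist x.1.2 x.2.2)
  fun_prop

instance : SecondCountableTopology (PS n) :=
  have hsurj : Function.Surjective (toPS : Amb n → PS n) := Function.surjective_id
  have := hsurj.denseRange.separableSpace continuous_toPS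
  UniformSpace.secondCountable_of_separable (PS n)

lemma preimage_toPS_closedBall_subset (p : PS n) {r : ℝ} (hr : 0 ≤ r) :
    toPS ⁻¹' closedBall p r ⊆ closedBall (toA p).1 r ×ˢ closedBall (toA p).2 (r ^ 2) := by
  intro x (hx : dist x.1 (toA p).1 + √(dist x.2 (toA p).2) ≤ r)
  exact ⟨(le_add_of_nonneg_right (Real.sqrt_nonneg _)).trans hx,
    (Real.sqrt_le_left hr).1 ((le_add_of_nonneg_left dist_nonneg).trans hx)⟩

lemma closedBall_prod_subset_preimage_toPS (p : PS n) (r : ℝ) {ρ : ℝ} (hρ : 0 ≤ ρ) :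
    closedBall (toA p).1 r ×ˢ closedBall (toA p).2 (ρ ^ 2) ⊆ toPS ⁻¹' closedBall p (r + ρ) :=
  fun _ hx => add_le_add hx.1 ((Real.sqrt_le_left hρ).2 hx.2)

/-- Lebesgue measure on `ℝⁿ × ℝ`, transported to the parabolic metric space. -/
def lebesgue (n : ℕ) : Measure (PS n) := (volume : Measure (Amb n)).map toPS

lemma lebesgue_closedEBall (p : PS n) (r : ℝ≥0) :
    lebesgue n (closedEBall p r) = volume (toPS ⁻¹' closedBall p r : Set (Amb n)) := by
  rw [lebesgue, closedEBall_coe,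
    Measure.map_apply continuous_toPS.measurable isClosed_closedBall.measurableSet]

theorem isAhlforsRegular_lebesgue (n : ℕ) : IsAhlforsRegular (lebesgue n) (n + 2) := by
  set ω : ℝ≥0∞ := 2 * volume (ball (0 : EuclideanSpace ℝ (Fin n)) 1)
  have hω0 : ω ≠ 0 := mul_ne_zero two_ne_zero (measure_ball_pos volume _ one_pos).ne'
  have hωt : ω ≠ ∞ := ENNReal.mul_ne_top ENNReal.ofNat_ne_top measure_ball_lt_top.ne
  have hbox (p : PS n) (r : ℝ≥0) :
      volume (closedBall (toA p).1 r ×ˢ closedBall (toA p).2 (r ^ 2)) =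
        ω * (r : ℝ≥0∞) ^ (n + 2) := by
    rw [Measure.volume_eq_prod, addHaar_prod_volume_closedBall_sq, finrank_euclideanSpace_fin]
  have hexp (r : ℝ≥0) : (r : ℝ≥0∞) ^ ((n + 2 : ℝ≥0) : ℝ) = (r : ℝ≥0∞) ^ (n + 2) := by
    rw [← ENNReal.rpow_natCast]
    norm_num
  refine ⟨ω * 2⁻¹ ^ (n + 2), ω, mul_ne_zero hω0 (by simp), hωt, .of_forall fun r p => ?_⟩
  rw [hexp, lebesgue_closedEBall]
  constructor
  · calc ω * 2⁻¹ ^ (n + 2) * (r : ℝ≥0∞) ^ (n + 2)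
      _ = ω * ((r / 2 : ℝ≥0) : ℝ≥0∞) ^ (n + 2) := by
        rw [mul_assoc, ← mul_pow, ENNReal.coe_div two_ne_zero, div_eq_mul_inv, mul_comm 2⁻¹,
          ENNReal.coe_ofNat]
      _ = volume (closedBall (toA p).1 (r / 2 : ℝ≥0) ×ˢ closedBall (toA p).2 ((r / 2 : ℝ≥0) ^ 2)) :=
        (hbox p (r / 2)).symm
      _ ≤ volume (toPS ⁻¹' closedBall p r : Set (Amb n)) := by
        refine measure_mono ?_
        simpa using closedBall_prod_subset_preimage_toPS p (r / 2) (r / 2 : ℝ≥0).coe_nonneg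
  · exact (measure_mono (preimage_toPS_closedBall_subset p r.coe_nonneg)).trans_eq (hbox p r)

end ParabolicSpace

/-- The metric space `(ℝⁿ × ℝ, d)` with the parabolic metric `d` has Hausdorff
dimension `n + 2`. -/
theorem parabolic_hausdorff_dimension (n : ℕ) (hn : 1 ≤ n) :
    dimH (univ : Set (PS n)) = (n : ℝ≥0∞) + 2 := by
  have : Nonempty (PS n) := ⟨toPS 0⟩
  simpa using (isAhlforsRegular_lebesgue n).dimH_univ

end Parabolic
end
end

section
/- Let Q₀ ∈ 𝔻 be a dyadic cube of ℝ^d, let μ be a regular Borel measure on Q₀ that is dyadically doubling on Q₀, and let {𝒪_l}_{l=1}^k, with families ℱ_l, be a good ε₀-cover of a Borel set F ⊆ Q₀ with respect to μ of length k. Then for all indices 1 ≤ m ≤ l ≤ k and every cube Q ∈ ℱ_m, one has μ(𝒪_l ∩ Q) ≤ ε₀^{l−m} μ(Q). -/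
/-!
Two dyadic cubes are nested or disjoint. Fix `m < l` and `Q ∈ ℱ_m`, and suppose that the bound is
known for the cubes of `ℱ_{m+1}`.

If `Q ⊆ 𝒪_{m+1}`, smallness reads `μ(Q) ≤ ε₀ μ(Q)`, which iterates to `μ(Q) ≤ ε₀^{l−m} μ(Q)`.
Otherwise every `R ∈ ℱ_{m+1}` that meets `Q` lies in `Q`, and summing
`μ(𝒪_l ∩ R) ≤ ε₀^{l−m−1} μ(R)` over these disjoint `R` gives
`μ(𝒪_l ∩ Q) ≤ ε₀^{l−m−1} μ(𝒪_{m+1} ∩ Q) ≤ ε₀^{l−m} μ(Q)`.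
-/


noncomputable section
open MeasureTheory Set Matrix
open scoped ENNReal NNReal

namespace Parabolic

/-- The standard dyadic cube `2^{−k}(z + [0,1)^d)` of `ℝ^d`. -/
def dCube (d : ℕ) (k : ℤ) (z : Fin d → ℤ) : Set (Fin d → ℝ) :=
  {x | ∀ i, (z i : ℝ) * 2 ^ (-k) ≤ x i ∧ x i < ((z i : ℝ) + 1) * 2 ^ (-k)}

/-- `Q` is a cube of the standard dyadic grid `𝔻` of `ℝ^d`. -/
def IsDyadic {d : ℕ} (Q : Set (Fin d → ℝ)) : Prop := ∃ k z, Q = dCube d k z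

/-- `Q'` is a dyadic child of `Q`. -/
def IsDyadicChild {d : ℕ} (Q' Q : Set (Fin d → ℝ)) : Prop :=
  ∃ (k : ℤ) (z z' : Fin d → ℤ), Q = dCube d k z ∧ Q' = dCube d (k + 1) z' ∧ Q' ⊆ Q

/-- `μ` is dyadically doubling on `Q₀` with constant `Cμ`: every dyadic subcube of `Q₀`
has finite positive measure, and `μ(Q) ≤ Cμ μ(Q')` whenever `Q'` is a dyadic child of a
dyadic cube `Q ⊆ Q₀`. -/
def DyadicallyDoubling {d : ℕ} (μ : Measure (Fin d → ℝ)) (Q₀ : Set (Fin d → ℝ))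
    (Cμ : ℝ) : Prop :=
  (∀ Q : Set (Fin d → ℝ), IsDyadic Q → Q ⊆ Q₀ → 0 < μ Q ∧ μ Q < ⊤) ∧
    ∀ Q Q' : Set (Fin d → ℝ), IsDyadic Q → Q ⊆ Q₀ → IsDyadicChild Q' Q →
      μ Q ≤ ENNReal.ofReal Cμ * μ Q'

/-- A good `ε₀`-cover of `F` (with respect to `μ`) from `F` to `Q₀`, of length `k`:
Borel sets `𝒪_l = O l` (`1 ≤ l ≤ k`), each a disjoint union of the dyadic subcubes of
`Q₀` in the family `Fam l`, with `F ⊆ 𝒪_k ⊆ ⋯ ⊆ 𝒪_1 ⊆ Q₀` and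
`μ(𝒪_l ∩ Q) ≤ ε₀ μ(Q)` for every `Q ∈ Fam (l−1)`. -/
structure GoodCover {d : ℕ} (μ : Measure (Fin d → ℝ)) (Q₀ F : Set (Fin d → ℝ)) (ε₀ : ℝ)
    (k : ℕ) (O : ℕ → Set (Fin d → ℝ)) (Fam : ℕ → Set (Set (Fin d → ℝ))) : Prop where
  one_le : 1 ≤ k
  mem_dyadic : ∀ l, 1 ≤ l → l ≤ k → ∀ Q ∈ Fam l, IsDyadic Q ∧ Q ⊆ Q₀
  disj : ∀ l, 1 ≤ l → l ≤ k → (Fam l).Pairwise Disjoint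
  unions : ∀ l, 1 ≤ l → l ≤ k → O l = ⋃₀ Fam l
  last : F ⊆ O k
  nested : ∀ l, 2 ≤ l → l ≤ k → O l ⊆ O (l - 1)
  first : O 1 ⊆ Q₀
  small : ∀ l, 2 ≤ l → l ≤ k → ∀ Q ∈ Fam (l - 1),
    μ (O l ∩ Q) ≤ ENNReal.ofReal ε₀ * μ Q

theorem mem_dCube_iff {d : ℕ} {k : ℤ} {z : Fin d → ℤ} {x : Fin d → ℝ} :
    x ∈ dCube d k z ↔ ∀ i, ⌊x i * 2 ^ k⌋ = z i := by
  have h2k : (0 : ℝ) < 2 ^ k := by positivity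
  refine forall_congr' fun i => ?_
  rw [Int.floor_eq_iff, _root_.zpow_neg, ← div_eq_mul_inv, ← div_eq_mul_inv, div_le_iff₀ h2k,
    lt_div_iff₀ h2k]

theorem measurableSet_dCube (d : ℕ) (k : ℤ) (z : Fin d → ℤ) : MeasurableSet (dCube d k z) := by
  simp only [dCube, ofPred_forall]
  measurability

theorem IsDyadic.measurableSet {d : ℕ} {Q : Set (Fin d → ℝ)} (hQ : IsDyadic Q) :
    MeasurableSet Q := by
  obtain ⟨k, z, rfl⟩ := hQ
  exact measurableSet_dCube d k z

theorem countable_setOf_isDyadic (d : ℕ) : {Q : Set (Fin d → ℝ) | IsDyadic Q}.Countable := by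
  refine (countable_range fun p : ℤ × (Fin d → ℤ) => dCube d p.1 p.2).mono ?_
  rintro _ ⟨k, z, rfl⟩
  exact ⟨(k, z), rfl⟩

theorem floor_mul_zpow_eq_of_le {K : Type*} [Field K] [LinearOrder K] [IsStrictOrderedRing K]
    [FloorRing K] {b : ℕ} (hb : b ≠ 0) {k k' : ℤ} (hk : k ≤ k') {s t : K}
    (h : ⌊s * (b : K) ^ k'⌋ = ⌊t * (b : K) ^ k'⌋) : ⌊s * (b : K) ^ k⌋ = ⌊t * (b : K) ^ k⌋ := by
  obtain ⟨n, rfl⟩ := Int.le.dest hk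
  have floor_eq_div (r : K) : ⌊r * (b : K) ^ k⌋ = ⌊r * (b : K) ^ (k + n)⌋ / (b ^ n : ℕ) := by
    rw [← Int.mul_natCast_floor_div_cancel (pow_ne_zero n hb), mul_assoc,
      zpow_add₀ (Nat.cast_ne_zero.2 hb), zpow_natCast, Nat.cast_pow]
  rw [floor_eq_div, floor_eq_div, h]

theorem dCube_subset_dCube_of_le {d : ℕ} {k k' : ℤ} (hk : k ≤ k') {z z' : Fin d → ℤ}
    (h : (dCube d k z ∩ dCube d k' z').Nonempty) : dCube d k' z' ⊆ dCube d k z := by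
  obtain ⟨x, hx, hx'⟩ := h
  rw [mem_dCube_iff] at hx hx'
  intro y hy
  rw [mem_dCube_iff] at hy ⊢
  intro i
  rw [← hx i]
  exact floor_mul_zpow_eq_of_le (b := 2) two_ne_zero hk ((hy i).trans (hx' i).symm)

theorem IsDyadic.subset_or_subset {d : ℕ} {Q R : Set (Fin d → ℝ)} (hQ : IsDyadic Q)
    (hR : IsDyadic R) (hQR : (Q ∩ R).Nonempty) : Q ⊆ R ∨ R ⊆ Q := by
  obtain ⟨k, z, rfl⟩ := hQ
  obtain ⟨k', z', rfl⟩ := hR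
  rcases le_total k k' with hk | hk
  · exact Or.inr (dCube_subset_dCube_of_le hk hQR)
  · exact Or.inl (dCube_subset_dCube_of_le hk (inter_comm _ _ ▸ hQR))

theorem measure_le_mul_measure_sUnion {α : Type*} [MeasurableSpace α] {μ : Measure α}
    {S : Set (Set α)} (hcount : S.Countable) (hdisj : S.Pairwise Disjoint)
    (hmeas : ∀ R ∈ S, MeasurableSet R) {A : Set α} (hA : A ⊆ ⋃₀ S) {c : ℝ≥0∞}
    (hc : ∀ R ∈ S, μ (A ∩ R) ≤ c * μ R) : μ A ≤ c * μ (⋃₀ S) :=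
  calc
    μ A = μ (⋃ R ∈ S, A ∩ R) := by rw [← inter_iUnion₂, ← sUnion_eq_biUnion, inter_eq_left.2 hA]
    _ ≤ ∑' R : S, μ (A ∩ R) := measure_biUnion_le μ hcount _
    _ ≤ ∑' R : S, c * μ R := ENNReal.tsum_le_tsum fun R => hc R R.2
    _ = c * μ (⋃₀ S) := by rw [ENNReal.tsum_mul_left, measure_sUnion hcount hdisj hmeas]

/-- A good cover of length `k` in an arbitrary measurable space, with ratio `c` and
`𝒪_l = ⋃₀ Fam l`. The geometry of dyadic cubes is replaced by the requirement that intersecting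
members of consecutive families be nested, in either order. As in `GoodCover`, levels run from `1`
to `k`. -/
structure LaminarGoodCover {α : Type*} [MeasurableSpace α] (μ : Measure α) (c : ℝ≥0∞) (k : ℕ)
    (Fam : ℕ → Set (Set α)) : Prop where
  countable : ∀ l ∈ Icc 1 k, (Fam l).Countable
  measurableSet : ∀ l ∈ Icc 1 k, ∀ Q ∈ Fam l, MeasurableSet Q
  disjoint : ∀ l ∈ Icc 1 k, (Fam l).Pairwise Disjoint
  laminar : ∀ l ∈ Ico 1 k, ∀ Q ∈ Fam l, ∀ R ∈ Fam (l + 1), (Q ∩ R).Nonempty → Q ⊆ R ∨ R ⊆ Q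
  nested : ∀ l ∈ Ico 1 k, ⋃₀ Fam (l + 1) ⊆ ⋃₀ Fam l
  small : ∀ l ∈ Ico 1 k, ∀ Q ∈ Fam l, μ (⋃₀ Fam (l + 1) ∩ Q) ≤ c * μ Q

namespace LaminarGoodCover

variable {α : Type*} [MeasurableSpace α] {μ : Measure α} {c : ℝ≥0∞} {k : ℕ}
  {Fam : ℕ → Set (Set α)}

theorem sUnion_antitoneOn (h : LaminarGoodCover μ c k Fam) :
    AntitoneOn (fun l => ⋃₀ Fam l) (Icc 1 k) :=
  antitoneOn_of_succ_le ordConnected_Icc fun l _ hl hl' => h.nested l ⟨hl.1, hl'.2⟩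

theorem measure_le_pow_mul_of_subset (h : LaminarGoodCover μ c k Fam) {m : ℕ}
    (hm : m ∈ Ico 1 k) {Q : Set α} (hQ : Q ∈ Fam m) (hsub : Q ⊆ ⋃₀ Fam (m + 1)) (n : ℕ) :
    μ Q ≤ c ^ n * μ Q := by
  have hle : μ Q ≤ c • μ Q := by
    simpa only [smul_eq_mul, inter_eq_right.2 hsub] using h.small m hm Q hQ
  simpa only [smul_eq_mul] using le_pow_smul hle n

theorem measure_inter_le_mul_of_not_subset (h : LaminarGoodCover μ c k Fam) {m : ℕ}
    (hm : m ∈ Ico 1 k) {Q A : Set α} (hQ : Q ∈ Fam m) (hnot : ¬ Q ⊆ ⋃₀ Fam (m + 1))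
    (hA : A ⊆ ⋃₀ Fam (m + 1)) {a : ℝ≥0∞} (ha : ∀ R ∈ Fam (m + 1), μ (A ∩ R) ≤ a * μ R) :
    μ (A ∩ Q) ≤ a * μ (⋃₀ Fam (m + 1) ∩ Q) := by
  have hm' : m + 1 ∈ Icc 1 k := ⟨m.succ_pos, hm.2⟩
  let S := {R ∈ Fam (m + 1) | R ⊆ Q}
  have hS : S ⊆ Fam (m + 1) := sep_subset _ _
  have hcover : A ∩ Q ⊆ ⋃₀ S := by
    rintro x ⟨hxA, hxQ⟩
    obtain ⟨R, hR, hxR⟩ := hA hxA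
    have hRQ : R ⊆ Q := (h.laminar m hm Q hQ R hR ⟨x, hxQ, hxR⟩).resolve_left
      fun hQR => hnot (hQR.trans (subset_sUnion_of_mem hR))
    exact ⟨R, ⟨hR, hRQ⟩, hxR⟩
  calc
    μ (A ∩ Q) ≤ a * μ (⋃₀ S) := by
      refine measure_le_mul_measure_sUnion ((h.countable _ hm').mono hS)
        ((h.disjoint _ hm').mono hS) (fun R hR => h.measurableSet _ hm' R (hS hR)) hcover
        fun R hR => ?_
      exact (measure_mono (inter_subset_inter_left R inter_subset_left)).trans (ha R (hS hR))
    _ ≤ a * μ (⋃₀ Fam (m + 1) ∩ Q) := by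
      gcongr
      exact subset_inter (sUnion_subset_sUnion hS) (sUnion_subset fun R hR => hR.2)

end LaminarGoodCover

theorem GoodCover.laminarGoodCover {d : ℕ} {μ : Measure (Fin d → ℝ)} {Q₀ F : Set (Fin d → ℝ)}
    {ε₀ : ℝ} {k : ℕ} {O : ℕ → Set (Fin d → ℝ)} {Fam : ℕ → Set (Set (Fin d → ℝ))}
    (h : GoodCover μ Q₀ F ε₀ k O Fam) : LaminarGoodCover μ (ENNReal.ofReal ε₀) k Fam := by
  have isDyadic {l : ℕ} (hl : l ∈ Icc 1 k) {Q : Set (Fin d → ℝ)} (hQ : Q ∈ Fam l) : IsDyadic Q :=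
    (h.mem_dyadic l hl.1 hl.2 Q hQ).1
  have sUnion_eq {l : ℕ} (hl : l ∈ Icc 1 k) : ⋃₀ Fam l = O l := (h.unions l hl.1 hl.2).symm
  have succ_mem {l : ℕ} (hl : l ∈ Ico 1 k) : l + 1 ∈ Icc 1 k := ⟨l.succ_pos, hl.2⟩
  have two_le_succ {l : ℕ} (hl : l ∈ Ico 1 k) : 2 ≤ l + 1 := Nat.succ_le_succ hl.1
  exact
    { countable := fun l hl => (countable_setOf_isDyadic d).mono fun Q hQ => isDyadic hl hQ
      measurableSet := fun l hl Q hQ => (isDyadic hl hQ).measurableSet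
      disjoint := fun l hl => h.disj l hl.1 hl.2
      laminar := fun l hl Q hQ R hR =>
        (isDyadic (Ico_subset_Icc_self hl) hQ).subset_or_subset (isDyadic (succ_mem hl) hR)
      nested := fun l hl => by
        rw [sUnion_eq (succ_mem hl), sUnion_eq (Ico_subset_Icc_self hl)]
        exact h.nested (l + 1) (two_le_succ hl) hl.2
      small := fun l hl Q hQ => by
        rw [sUnion_eq (succ_mem hl)]
        exact h.small (l + 1) (two_le_succ hl) hl.2 Q hQ }

theorem good_cover_geometric_decay_general {α : Type*} [MeasurableSpace α] {μ : Measure α}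
    {c : ℝ≥0∞} {k : ℕ} {Fam : ℕ → Set (Set α)} (h : LaminarGoodCover μ c k Fam) {m l : ℕ}
    (hm : 1 ≤ m) (hml : m ≤ l) (hl : l ≤ k) {Q : Set α} (hQ : Q ∈ Fam m) :
    μ (⋃₀ Fam l ∩ Q) ≤ c ^ (l - m) * μ Q := by
  induction hml using Nat.decreasingInduction generalizing Q with
  | self => simpa only [Nat.sub_self, pow_zero, one_mul] using measure_mono inter_subset_right
  | of_succ m hml ih =>
    have hmk : m ∈ Ico 1 k := ⟨hm, hml.trans_le hl⟩
    by_cases hsub : Q ⊆ ⋃₀ Fam (m + 1)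
    · exact (measure_mono inter_subset_right).trans
        (h.measure_le_pow_mul_of_subset hmk hQ hsub (l - m))
    · have hanti : ⋃₀ Fam l ⊆ ⋃₀ Fam (m + 1) :=
        h.sUnion_antitoneOn ⟨m.succ_pos, hmk.2⟩ ⟨hm.trans hml.le, hl⟩ hml
      calc
        μ (⋃₀ Fam l ∩ Q) ≤ c ^ (l - (m + 1)) * μ (⋃₀ Fam (m + 1) ∩ Q) :=
          h.measure_inter_le_mul_of_not_subset hmk hQ hsub hanti fun R hR => ih m.succ_pos hR
        _ ≤ c ^ (l - (m + 1)) * (c * μ Q) := by gcongr; exact h.small m hmk Q hQ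
        _ = c ^ (l - m) * μ Q := by
          rw [← mul_assoc, ← pow_succ, ← Nat.sub_sub, Nat.sub_add_cancel (Nat.sub_pos_of_lt hml)]

/-- Iterated smallness for good `ε₀`-covers: if `{𝒪_l}` is a good `ε₀`-cover of `F ⊆ Q₀`
with respect to a regular Borel measure `μ` which is dyadically doubling on `Q₀`, then
`μ(𝒪_l ∩ Q) ≤ ε₀^{l−m} μ(Q)` for all `1 ≤ m ≤ l ≤ k` and all `Q ∈ ℱ_m`. -/
theorem good_cover_geometric_decay (d : ℕ) (k : ℤ) (z : Fin d → ℤ)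
    (μ : Measure (Fin d → ℝ)) (Cμ : ℝ) (hreg : μ.Regular)
    (hdbl : DyadicallyDoubling μ (dCube d k z) Cμ)
    (ε₀ : ℝ) (hε₀ : 0 < ε₀) (hε₁ : ε₀ < 1)
    (F : Set (Fin d → ℝ)) (hF : F ⊆ dCube d k z) (hFmeas : MeasurableSet F)
    (kk : ℕ) (O : ℕ → Set (Fin d → ℝ)) (Fam : ℕ → Set (Set (Fin d → ℝ)))
    (hgc : GoodCover μ (dCube d k z) F ε₀ kk O Fam) :
    ∀ m l : ℕ, 1 ≤ m → m ≤ l → l ≤ kk → ∀ Q ∈ Fam m,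
      μ (O l ∩ Q) ≤ ENNReal.ofReal (ε₀ ^ (l - m)) * μ Q := by
  intro m l hm hml hl Q hQ
  rw [hgc.unions l (hm.trans hml) hl, ENNReal.ofReal_pow hε₀.le]
  exact good_cover_geometric_decay_general hgc.laminarGoodCover hm hml hl hQ

end Parabolic
end
end
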